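/- Two types in a subtype relation have exactly the same set of capabilities: if 𝒞 ⊢ α ⊑ β for derived type variables α, β, then for every word w ∈ Σ*, 𝒞 ⊢ VAR α.w if and only if 𝒞 ⊢ VAR β.w. -/

import Mathlib

/-- The two-element sign monoid `{⊕, ⊖}` of variances. -/
inductive Sign : Type where
  | pos
  | neg
deriving DecidableEq, Repr

/-- Multiplication in the sign monoid (`⊕` is the identity, `⊖ · ⊖ = ⊕`). -/
def Sign.mul : Sign → Sign → Sign
  | .pos, s => s
  | .neg, .pos => .neg
  | .neg, .neg => .pos

/-- Variance of a word in `Σ*`: `⟨ε⟩ = ⊕`, `⟨xw⟩ = ⟨x⟩·⟨w⟩`. -/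
def wordSign {L : Type} (sgn : L → Sign) : List L → Sign
  | [] => .pos
  | x :: w => (sgn x).mul (wordSign sgn w)

/-- A derived type variable `α.w` with base type variable `α ∈ 𝒱` and word `w ∈ Σ*`. -/
structure DTV (V L : Type) : Type where
  base : V
  word : List L

/-- Appending a single field label to a derived type variable: `α.ℓ`. -/
def DTV.app {V L : Type} (α : DTV V L) (ℓ : L) : DTV V L :=
  ⟨α.base, α.word ++ [ℓ]⟩

/-- A constraint: either `VAR X` or `X ⊑ Y` for derived type variables. -/
inductive Constraint (V L : Type) : Type where
  | var : DTV V L → Constraint V L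
  | sub : DTV V L → DTV V L → Constraint V L

/-- Entailment `𝒞 ⊢ c`: the least relation containing `𝒞` and closed under the
deduction rules T-Left, T-Right, T-InheritL, T-InheritR, T-Prefix, S-Refl,
S-Trans, S-Field⊕, S-Field⊖ and S-Pointer. -/
inductive Entails {V L : Type} (sgn : L → Sign) (load store : L)
    (C : Set (Constraint V L)) : Constraint V L → Prop where
  | ax {c} : c ∈ C → Entails sgn load store C c
  | tLeft {α β} : Entails sgn load store C (.sub α β) →
      Entails sgn load store C (.var α)
  | tRight {α β} : Entails sgn load store C (.sub α β) →
      Entails sgn load store C (.var β)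
  | tInheritL {α β : DTV V L} {ℓ} : Entails sgn load store C (.sub α β) →
      Entails sgn load store C (.var (α.app ℓ)) →
      Entails sgn load store C (.var (β.app ℓ))
  | tInheritR {α β : DTV V L} {ℓ} : Entails sgn load store C (.sub α β) →
      Entails sgn load store C (.var (β.app ℓ)) →
      Entails sgn load store C (.var (α.app ℓ))
  | tPrefix {α : DTV V L} {ℓ} : Entails sgn load store C (.var (α.app ℓ)) →
      Entails sgn load store C (.var α)
  | sRefl {α} : Entails sgn load store C (.var α) →
      Entails sgn load store C (.sub α α)
  | sTrans {α β γ} : Entails sgn load store C (.sub α β) →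
      Entails sgn load store C (.sub β γ) →
      Entails sgn load store C (.sub α γ)
  | sFieldPos {α β : DTV V L} {ℓ} : Entails sgn load store C (.sub α β) →
      Entails sgn load store C (.var (β.app ℓ)) → sgn ℓ = .pos →
      Entails sgn load store C (.sub (α.app ℓ) (β.app ℓ))
  | sFieldNeg {α β : DTV V L} {ℓ} : Entails sgn load store C (.sub α β) →
      Entails sgn load store C (.var (β.app ℓ)) → sgn ℓ = .neg →
      Entails sgn load store C (.sub (β.app ℓ) (α.app ℓ))
  | sPointer {α : DTV V L} : Entails sgn load store C (.var (α.app load)) →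
      Entails sgn load store C (.var (α.app store)) →
      Entails sgn load store C (.sub (α.app store) (α.app load))

/-- `𝒞` is closed under T-Left, T-Right and T-Prefix. -/
def ClosedTLRP {V L : Type} (C : Set (Constraint V L)) : Prop :=
  (∀ α β : DTV V L, Constraint.sub α β ∈ C →
      Constraint.var α ∈ C ∧ Constraint.var β ∈ C) ∧
  (∀ (α : DTV V L) (ℓ : L), Constraint.var (α.app ℓ) ∈ C →
      Constraint.var α ∈ C)

/-- Extending a derived type variable by a word: `α.w`. -/
def DTV.ext {V L : Type} (α : DTV V L) (w : List L) : DTV V L :=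
  ⟨α.base, α.word ++ w⟩

/-!
Each S-Field rule turns a subtype relation between `α` and `β` into one between `α.ℓ` and `β.ℓ`;
the variance of `ℓ` only decides its direction. Being related in *some* direction is therefore
preserved by every label that `α` carries, and peeling labels off the end of `α.w`, where T-Prefix
supplies the existence of the shorter type variable, shows that `α.w` and `β.w` are related
whenever `α.w` exists.
-/

theorem DTV.ext_nil {V L : Type} (α : DTV V L) : α.ext [] = α := by
  simp [DTV.ext]

theorem DTV.ext_append_singleton {V L : Type} (α : DTV V L) (w : List L) (ℓ : L) :
    α.ext (w ++ [ℓ]) = (α.ext w).app ℓ := by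
  simp [DTV.ext, DTV.app]

namespace Entails

/-- Comparability of derived type variables: `𝒞` entails `α ⊑ β` or `β ⊑ α`. Unlike `⊑` itself, this
relation is preserved by covariant and contravariant labels alike. -/
def Comparable {V L : Type} (sgn : L → Sign) (load store : L) (C : Set (Constraint V L)) :
    DTV V L → DTV V L → Prop :=
  Relation.SymmGen fun α β => Entails sgn load store C (.sub α β)

variable {V L : Type} {sgn : L → Sign} {load store : L} {C : Set (Constraint V L)} {α β : DTV V L}

theorem Comparable.symm (h : Comparable sgn load store C α β) :
    Comparable sgn load store C β α :=
  Relation.SymmGen.symm h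

theorem Comparable.var_right (h : Comparable sgn load store C α β) :
    Entails sgn load store C (.var β) :=
  h.elim .tRight .tLeft

theorem comparable_app_of_sub {ℓ : L} (h : Entails sgn load store C (.sub α β))
    (hβ : Entails sgn load store C (.var (β.app ℓ))) :
    Comparable sgn load store C (α.app ℓ) (β.app ℓ) := by
  cases hℓ : sgn ℓ with
  | pos => exact .inl (.sFieldPos h hβ hℓ)
  | neg => exact .inr (.sFieldNeg h hβ hℓ)

theorem Comparable.app {ℓ : L} (h : Comparable sgn load store C α β)
    (hα : Entails sgn load store C (.var (α.app ℓ))) :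
    Comparable sgn load store C (α.app ℓ) (β.app ℓ) := by
  rcases h with hαβ | hβα
  · exact comparable_app_of_sub hαβ (.tInheritL hαβ hα)
  · exact (comparable_app_of_sub hβα hα).symm

theorem Comparable.ext {w : List L} (h : Comparable sgn load store C α β)
    (hα : Entails sgn load store C (.var (α.ext w))) :
    Comparable sgn load store C (α.ext w) (β.ext w) := by
  induction w using List.reverseRecOn with
  | nil => simpa only [DTV.ext_nil] using h
  | append_singleton w ℓ ih =>
    rw [DTV.ext_append_singleton] at hα
    rw [DTV.ext_append_singleton, DTV.ext_append_singleton]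
    exact (ih hα.tPrefix).app hα

end Entails

theorem entails_var_ext_iff_of_sub_general {V L : Type} {sgn : L → Sign} {load store : L}
    {C : Set (Constraint V L)} {α β : DTV V L}
    (h : Entails.Comparable sgn load store C α β) (w : List L) :
    Entails sgn load store C (.var (α.ext w)) ↔
      Entails sgn load store C (.var (β.ext w)) :=
  ⟨fun hα => (h.ext hα).var_right, fun hβ => (h.symm.ext hβ).var_right⟩

/-- two types in a subtype relation have exactly the same set of
capabilities: if `𝒞 ⊢ α ⊑ β`, then for every word `w ∈ Σ*`,
`𝒞 ⊢ VAR α.w` if and only if `𝒞 ⊢ VAR β.w`. -/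
theorem entails_var_ext_iff_of_sub {V L : Type} (sgn : L → Sign)
    (load store : L) (hload : sgn load = .pos) (hstore : sgn store = .neg)
    (C : Set (Constraint V L)) (α β : DTV V L)
    (h : Entails sgn load store C (.sub α β)) (w : List L) :
    Entails sgn load store C (.var (α.ext w)) ↔
      Entails sgn load store C (.var (β.ext w)) :=
  entails_var_ext_iff_of_sub_general (.inl h) w
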